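/- Assume A is standardized and let 1 ≤ β ≤ m. Let x ∈ range(Aᵀ), and for each subset τ ⊆ {1,…,m} of cardinality β let i(τ) ∈ τ be an index maximizing |A^{(i)}x − b_i| over i ∈ τ, and set x_τ⁺ = x − (A^{(i(τ))}x − b_{i(τ)})·(A^{(i(τ))})ᵀ. Assume D := Σ_τ max_{i∈τ} (A^{(i)}x − b_i)² > 0 and set ξ = (Σ_τ ‖A_τ x − b_τ‖₂²) / D. Then (1/C(m,β)) Σ_τ ‖x_τ⁺ − x⋆‖₂² ≤ (1 − (β/(ξ·m))·λ_min⁺(AᵀA)) · ‖x − x⋆‖₂². -/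

import Mathlib

open Matrix Finset

/-- The largest eigenvalue of a square real matrix (as the supremum of its
eigenvalue set). -/
noncomputable def maxEig {k : ℕ} (M : Matrix (Fin k) (Fin k) ℝ) : ℝ :=
  sSup {μ : ℝ | Module.End.HasEigenvalue (Matrix.mulVecLin M) μ}

/-- The smallest positive eigenvalue of a square real matrix. -/
noncomputable def minPosEig {k : ℕ} (M : Matrix (Fin k) (Fin k) ℝ) : ℝ :=
  sInf {μ : ℝ | Module.End.HasEigenvalue (Matrix.mulVecLin M) μ ∧ 0 < μ}

/-- The restriction of `A` to the rows indexed by `I`. -/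
def rowSub {m n : ℕ} (A : Matrix (Fin m) (Fin n) ℝ) (I : Finset (Fin m)) :
    Matrix {i : Fin m // i ∈ I} (Fin n) ℝ :=
  fun i j => A i.1 j

/-- Squared Euclidean norm. -/
noncomputable def sqNorm {k : ℕ} (v : Fin k → ℝ) : ℝ := ∑ j, (v j) ^ 2

/-- `xp` is the exact block Kaczmarz update of `x` with respect to the row
index set `I`: it satisfies the equations indexed by `I` and minimizes the
distance to `x` among all such points (hence is the orthogonal projection of
`x` onto the affine solution set, which is the unique such minimizer). -/
def IsKaczmarzUpdate {m n : ℕ} (A : Matrix (Fin m) (Fin n) ℝ)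
    (b : Fin m → ℝ) (I : Finset (Fin m)) (x xp : Fin n → ℝ) : Prop :=
  (∀ i ∈ I, A i ⬝ᵥ xp = b i) ∧
  ∀ y : Fin n → ℝ, (∀ i ∈ I, A i ⬝ᵥ y = b i) → sqNorm (xp - x) ≤ sqNorm (y - x)

/-- `I` is a greedy `δ`-subset of `τ` for `x`: `I ⊆ τ`, `|I| = δ`, and the
residual entries on `I` dominate (in absolute value) those on `τ \ I`. -/
def IsGreedySubset {m n : ℕ} (A : Matrix (Fin m) (Fin n) ℝ) (b : Fin m → ℝ)
    (x : Fin n → ℝ) (δ : ℕ) (τ I : Finset (Fin m)) : Prop :=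
  I ⊆ τ ∧ I.card = δ ∧
    ∀ i ∈ I, ∀ j ∈ τ \ I, |A j ⬝ᵥ x - b j| ≤ |A i ⬝ᵥ x - b i|

/-- Every element lies in the same number of `β`-subsets, in double-counting form. -/
lemma card_mul_sum_powersetCard_sum {m β : ℕ} (hβ : 1 ≤ β) (f : Fin m → ℝ) :
    (m : ℝ) * ∑ τ ∈ powersetCard β (univ : Finset (Fin m)), ∑ l ∈ τ, f l =
      (m.choose β : ℝ) * β * ∑ l, f l := by
  have hcount (l : Fin m) :
      #{τ ∈ powersetCard β (univ : Finset (Fin m)) | l ∈ τ} = (m - 1).choose (β - 1) := by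
    simpa using card_filter_powersetCard_subset {l} (univ : Finset (Fin m)) β (by simp) (by simpa)
  have hswap : ∑ τ ∈ powersetCard β (univ : Finset (Fin m)), ∑ l ∈ τ, f l =
      ((m - 1).choose (β - 1) : ℝ) * ∑ l, f l := by
    rw [sum_comm' (t' := univ)
      (s' := fun l => {τ ∈ powersetCard β (univ : Finset (Fin m)) | l ∈ τ}) (by simp)]
    simp only [sum_const, hcount, nsmul_eq_mul, mul_sum]
  obtain ⟨k, rfl⟩ := Nat.exists_eq_add_of_le' hβ
  rcases m with _ | m
  · simp
  · have h := Nat.add_one_mul_choose_eq m k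
    rw [hswap, ← mul_assoc]
    congr 1
    exact_mod_cast h

lemma sqNorm_eq_dotProduct {k : ℕ} (v : Fin k → ℝ) : sqNorm v = v ⬝ᵥ v := by
  simp [sqNorm, dotProduct, sq]

/-- On the row space of `A`, the quadratic form of `Aᵀ * A` is bounded below by the smallest
positive eigenvalue. -/
lemma minPosEig_mul_sqNorm_le {m n : ℕ} (A : Matrix (Fin m) (Fin n) ℝ) (z : Fin m → ℝ) :
    minPosEig (Aᵀ * A) * sqNorm (Aᵀ *ᵥ z) ≤ sqNorm (A *ᵥ (Aᵀ *ᵥ z)) := by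
  have hpsd : (Aᵀ * A).PosSemidef := by simpa using posSemidef_conjTranspose_mul_self A
  set v : Fin n → Fin n → ℝ := fun k => hpsd.1.eigenvectorBasis k
  set μ := hpsd.1.eigenvalues with hμ
  have hparseval (u w : Fin n → ℝ) : u ⬝ᵥ w = ∑ k, (v k ⬝ᵥ u) * (v k ⬝ᵥ w) := by
    have h := hpsd.1.eigenvectorBasis.sum_inner_mul_inner (WithLp.toLp 2 u) (WithLp.toLp 2 w)
    simp only [EuclideanSpace.inner_eq_star_dotProduct, star_trivial] at h
    rw [dotProduct_comm, ← h]
    refine sum_congr rfl fun k _ => ?_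
    rw [dotProduct_comm w]
  have heig (k : Fin n) : (Aᵀ * A) *ᵥ v k = μ k • v k := hpsd.1.mulVec_eigenvectorBasis k
  have hadj (u w : Fin n → ℝ) : (A *ᵥ u) ⬝ᵥ (A *ᵥ w) = ((Aᵀ * A) *ᵥ u) ⬝ᵥ w := by
    rw [dotProduct_mulVec, ← mulVec_transpose, mulVec_mulVec]
  set e := Aᵀ *ᵥ z with he
  have hform : sqNorm (A *ᵥ e) = ∑ k, μ k * (v k ⬝ᵥ e) ^ 2 := by
    rw [sqNorm_eq_dotProduct, hadj, dotProduct_comm, hparseval]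
    refine sum_congr rfl fun k _ => ?_
    rw [dotProduct_comm (v k) ((Aᵀ * A) *ᵥ e), ← hadj, dotProduct_comm (A *ᵥ e), hadj, heig,
      smul_dotProduct, smul_eq_mul]
    ring
  rw [hform, sqNorm_eq_dotProduct, hparseval, mul_sum]
  refine sum_le_sum fun k _ => ?_
  rw [← sq]
  rcases (hpsd.eigenvalues_nonneg k).eq_or_lt with h0 | hpos
  · have hz : A *ᵥ v k = 0 := by
      rw [← dotProduct_self_eq_zero, hadj, heig, hμ, ← h0, zero_smul, zero_dotProduct]
    have : v k ⬝ᵥ e = 0 := by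
      rw [he, dotProduct_mulVec, vecMul_transpose, hz, zero_dotProduct]
    simp [this]
  · refine mul_le_mul_of_nonneg_right (csInf_le ⟨0, fun _ h => h.2.le⟩ ⟨?_, hpos⟩) (sq_nonneg _)
    refine Module.End.hasEigenvalue_of_hasEigenvector (x := v k)
      ⟨Module.End.mem_eigenspace_iff.2 (heig k), fun h => ?_⟩
    refine hpsd.1.eigenvectorBasis.orthonormal.ne_zero k ?_
    ext j
    exact congrFun h j

/-- Removing from `e` its component along a unit vector `a` decreases the squared norm by the
square of that component. -/
lemma sqNorm_sub_residual_smul {n : ℕ} {a : Fin n → ℝ} (ha : a ⬝ᵥ a = 1) (e : Fin n → ℝ) :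
    sqNorm (e - (a ⬝ᵥ e) • a) = sqNorm e - (a ⬝ᵥ e) ^ 2 := by
  simp only [sqNorm_eq_dotProduct, sub_dotProduct, dotProduct_sub, smul_dotProduct,
    dotProduct_smul, smul_eq_mul, ha, dotProduct_comm e a]
  ring

theorem skm_one_step {m n : ℕ} (β : ℕ) (hβ1 : 1 ≤ β) (hβm : β ≤ m)
    (A : Matrix (Fin m) (Fin n) ℝ) (hA : A ≠ 0)
    (hstd : ∀ i : Fin m, ∑ j, (A i j) ^ 2 = 1)
    (b : Fin m → ℝ)
    (xstar : Fin n → ℝ) (hconsistent : A.mulVec xstar = b)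
    (hxstar : xstar ∈ Set.range Aᵀ.mulVec)
    (x : Fin n → ℝ) (hx : x ∈ Set.range Aᵀ.mulVec)
    (i : Finset (Fin m) → Fin m)
    (hi : ∀ τ ∈ Finset.powersetCard β (Finset.univ : Finset (Fin m)),
      i τ ∈ τ ∧ ∀ j ∈ τ, |A j ⬝ᵥ x - b j| ≤ |A (i τ) ⬝ᵥ x - b (i τ)|)
    (xp : Finset (Fin m) → Fin n → ℝ)
    (hxp : ∀ τ : Finset (Fin m),
      xp τ = fun j => x j - (A (i τ) ⬝ᵥ x - b (i τ)) * A (i τ) j)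
    (D : ℝ)
    (hD : D = ∑ τ ∈ Finset.powersetCard β (Finset.univ : Finset (Fin m)),
      sSup ((fun l => (A l ⬝ᵥ x - b l) ^ 2) '' ↑τ))
    (hDpos : 0 < D)
    (ξ : ℝ)
    (hξ : ξ = (∑ τ ∈ Finset.powersetCard β (Finset.univ : Finset (Fin m)),
      ∑ l ∈ τ, (A l ⬝ᵥ x - b l) ^ 2) / D) :
    (1 / (m.choose β : ℝ)) *
        ∑ τ ∈ Finset.powersetCard β (Finset.univ : Finset (Fin m)),
          sqNorm (xp τ - xstar) ≤
      (1 - ((β : ℝ) / (ξ * (m : ℝ))) * minPosEig (Aᵀ * A)) * sqNorm (x - xstar) := by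
  obtain ⟨y, rfl⟩ := hx
  obtain ⟨ystar, rfl⟩ := hxstar
  set x := Aᵀ *ᵥ y
  set xstar := Aᵀ *ᵥ ystar
  set e := x - xstar with he
  have hres (l : Fin m) : A l ⬝ᵥ x - b l = A l ⬝ᵥ e := by
    rw [he, dotProduct_sub, ← hconsistent]
    rfl
  simp only [hres] at hi hxp hD hξ
  have hsup : ∀ τ ∈ powersetCard β (univ : Finset (Fin m)),
      sSup ((fun l => (A l ⬝ᵥ e) ^ 2) '' ↑τ) = (A (i τ) ⬝ᵥ e) ^ 2 := by
    intro τ hτ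
    refine IsGreatest.csSup_eq ⟨⟨i τ, (hi τ hτ).1, rfl⟩, ?_⟩
    rintro _ ⟨j, hj, rfl⟩
    exact sq_le_sq.2 ((hi τ hτ).2 j hj)
  rw [sum_congr rfl hsup] at hD
  have hstep (τ : Finset (Fin m)) :
      sqNorm (xp τ - xstar) = sqNorm e - (A (i τ) ⬝ᵥ e) ^ 2 := by
    rw [← sqNorm_sub_residual_smul (by simpa [dotProduct, sq] using hstd (i τ)), hxp τ]
    congr 1
    ext j
    simp only [he, Pi.sub_apply, Pi.smul_apply, smul_eq_mul]
    ring
  have hbound : minPosEig (Aᵀ * A) * sqNorm e ≤ sqNorm (A *ᵥ e) := by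
    have h := minPosEig_mul_sqNorm_le A (y - ystar)
    rwa [mulVec_sub] at h
  set S := ∑ τ ∈ powersetCard β (univ : Finset (Fin m)), ∑ l ∈ τ, (A l ⬝ᵥ e) ^ 2
  have hcount : (m : ℝ) * S = (m.choose β : ℝ) * β * sqNorm (A *ᵥ e) :=
    card_mul_sum_powersetCard_sum hβ1 _
  have hDS : D ≤ S := by
    rw [hD]
    exact sum_le_sum fun τ hτ =>
      single_le_sum (f := fun l => (A l ⬝ᵥ e) ^ 2) (fun _ _ => sq_nonneg _) (hi τ hτ).1
  have hS : 0 < S := hDpos.trans_le hDS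
  have hC : (0 : ℝ) < m.choose β := by exact_mod_cast Nat.choose_pos hβm
  have hm : (0 : ℝ) < m := by exact_mod_cast hβ1.trans hβm
  have hsum : ∑ τ ∈ powersetCard β (univ : Finset (Fin m)), sqNorm (xp τ - xstar) =
      m.choose β * sqNorm e - D := by
    simp [hstep, hD]
  have hmean : D / m.choose β = (β : ℝ) / (ξ * m) * sqNorm (A *ᵥ e) := by
    rw [hξ]
    field_simp
    linarith
  have hcoef : 0 ≤ (β : ℝ) / (ξ * m) := by
    rw [hξ]
    positivity
  calc _ = sqNorm e - D / m.choose β := by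
        rw [hsum]
        field_simp
    _ ≤ _ := by
        rw [hmean, sub_mul, one_mul, mul_assoc]
        exact sub_le_sub_left (mul_le_mul_of_nonneg_left hbound hcoef) _
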